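/- Let r ≥ 3 be an odd integer, let p = 2m+1 > 10 be a prime, set t = (r+1)/2 and n = r(2m+1) + t. Let T be a tree with m+1 edges that has a leaf z such that the tree T − z (T with the leaf z and its incident edge deleted) has at least 2m/5 leaves. Then T decomposes K_n \ K_t, the complete graph on n vertices minus the edges of a complete graph on some fixed set of t of its vertices. -/

import Mathlib

/-- `H` decomposes `G`: `G` is the edge-disjoint union of isomorphic copies of `H`,
each copy being given by an injective homomorphism of `H` into `G`, and every edge of `G`
lying in exactly one copy. -/
def Decomposes {α β : Type} (H : SimpleGraph α) (G : SimpleGraph β) : Prop :=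
  ∃ (ι : Type) (f : ι → α → β),
    (∀ i, Function.Injective (f i)) ∧
    (∀ i a b, H.Adj a b → G.Adj (f i a) (f i b)) ∧
    (∀ e ∈ G.edgeSet, ∃! q : ι × Sym2 α, q.2 ∈ H.edgeSet ∧ Sym2.map (f q.1) q.2 = e)

/-!
Put the host graph on the vertex set `B ⊕ ZMod (2 * m + 1) × ZMod r`, where `B` is the deleted
clique, and think of `{a} × ZMod r` as a column. Write `T` as `G = T - z` with a pendant edge at
`y`, and label the vertices of `G` by columns so that every nonzero difference of columns is
attained on exactly one dart of `G`. Such a labelling is found greedily on the non-leaves of `G` and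
then extended to the leaves by the combinatorial Nullstellensatz; it is injective on each of the two
parts, so each column is used at most twice.

A forest has fewer edges than vertices, so the graph of columns obtained from `G` is 3-degenerate,
hence 4-colourable. A vertex in a column of colour `i` is put at the height given, up to a constant,
by the `i`-th of four pairwise independent linear forms on `ZMod r × ZMod r`. As adjacent vertices
have independent forms, the copies indexed by `ZMod (2 * m + 1) × (ZMod r × ZMod r)` cover each edge
between two columns exactly once. The pendant edge follows a form independent of that of `y`: its
`r` values are shared between the `(r - 1) / 2` nonzero differences up to sign inside a column and
the `(r + 1) / 2` vertices of `B`, so the pendant edges cover all remaining edges exactly once.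
-/

section Polynomials

open MvPolynomial

theorem homogeneousComponent_add_mul {σ R : Type*} [CommSemiring R] {P Q : MvPolynomial σ R}
    {d e : ℕ} (hP : P.totalDegree ≤ d) (hQ : Q.totalDegree ≤ e) :
    homogeneousComponent (d + e) (P * Q) =
      homogeneousComponent d P * homogeneousComponent e Q := by
  classical
  have coeff_eq_zero {P : MvPolynomial σ R} {d : ℕ} {a : σ →₀ ℕ} (hP : P.totalDegree ≤ d)
      (ha : d < a.degree) : coeff a P = 0 :=
    coeff_eq_zero_of_totalDegree_lt (hP.trans_lt ha)
  ext n
  simp only [coeff_homogeneousComponent, coeff_mul]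
  trans ∑ ab ∈ Finset.HasAntidiagonal.antidiagonal n,
      if n.degree = d + e then coeff ab.1 P * coeff ab.2 Q else 0
  · split_ifs <;> simp
  refine Finset.sum_congr rfl fun ⟨a, b⟩ hab ↦ ?_
  have hdeg : n.degree = a.degree + b.degree := by
    rw [← Finset.HasAntidiagonal.mem_antidiagonal.1 hab, map_add]
  rcases lt_trichotomy a.degree d with ha | ha | ha
  · by_cases h : n.degree = d + e
    · simp [coeff_eq_zero hQ (a := b) (by omega)]
    · simp [h, ha.ne]
  · simp [hdeg, ha]
  · simp [coeff_eq_zero hP ha]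

theorem homogeneousComponent_sum_prod {ι σ R : Type*} [CommSemiring R] (s : Finset ι)
    {P : ι → MvPolynomial σ R} {d : ι → ℕ} (h : ∀ i ∈ s, (P i).totalDegree ≤ d i) :
    homogeneousComponent (∑ i ∈ s, d i) (∏ i ∈ s, P i) =
      ∏ i ∈ s, homogeneousComponent (d i) (P i) := by
  classical
  induction s using Finset.induction_on with
  | empty => simp
  | insert a s ha ih =>
    have hs : ∀ i ∈ s, (P i).totalDegree ≤ d i := fun i hi ↦ h i (Finset.mem_insert_of_mem hi)
    rw [Finset.prod_insert ha, Finset.prod_insert ha, Finset.sum_insert ha,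
      homogeneousComponent_add_mul (h a (Finset.mem_insert_self a s))
        ((totalDegree_finsetProd s P).trans (Finset.sum_le_sum hs)), ih hs]

theorem det_vandermonde_X_pow {R : Type*} [CommRing R] (l e : ℕ) :
    (Matrix.vandermonde fun i : Fin l ↦ (X i ^ e : MvPolynomial (Fin l) R)).det =
      ∑ σ : Equiv.Perm (Fin l), monomial (Finsupp.equivFunOnFinite.symm fun i ↦ e * (σ i : ℕ))
        ((Equiv.Perm.sign σ : ℤ) : R) := by
  rw [← Matrix.det_transpose, Matrix.det_apply']
  refine Finset.sum_congr rfl fun σ _ ↦ ?_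
  rw [monomial_eq, Finsupp.prod_fintype _ _ (by simp)]
  simp [Matrix.vandermonde_apply, ← pow_mul]

/- In the product of the Leibniz expansions, the terms of `σ` and `τ` contribute to this monomial
exactly when `τ = revPerm * σ`. -/
theorem coeff_det_vandermonde_X_pow_sq {R : Type*} [CommRing R] (l : ℕ) {e : ℕ} (he : 0 < e) :
    coeff (Finsupp.equivFunOnFinite.symm fun _ ↦ e * (l - 1))
      ((Matrix.vandermonde fun i : Fin l ↦ (X i ^ e : MvPolynomial (Fin l) R)).det ^ 2) =
      ((Equiv.Perm.sign (Fin.revPerm : Equiv.Perm (Fin l)) : ℤ) : R) * (l.factorial : R) := by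
  have exponent_iff (σ τ : Equiv.Perm (Fin l)) :
      ((Finsupp.equivFunOnFinite.symm fun i ↦ e * (σ i : ℕ)) +
        (Finsupp.equivFunOnFinite.symm fun i ↦ e * (τ i : ℕ)) =
        Finsupp.equivFunOnFinite.symm fun _ ↦ e * (l - 1)) ↔ Fin.revPerm * σ = τ := by
    simp only [Finsupp.ext_iff, Equiv.ext_iff, Fin.ext_iff, Finsupp.coe_add, Pi.add_apply,
      Finsupp.equivFunOnFinite_symm_apply_apply, ← mul_add, Nat.mul_right_inj he.ne',
      Equiv.Perm.mul_apply, Fin.revPerm_apply, Fin.val_rev]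
    exact forall_congr' fun i ↦ by have := (σ i).isLt; omega
  have sign_mul (σ : Equiv.Perm (Fin l)) :
      Equiv.Perm.sign σ * Equiv.Perm.sign (Fin.revPerm * σ) =
        Equiv.Perm.sign (Fin.revPerm : Equiv.Perm (Fin l)) := by
    rw [Equiv.Perm.sign_mul, mul_left_comm, Int.units_mul_self, mul_one]
  rw [det_vandermonde_X_pow, sq, Finset.sum_mul_sum]
  simp only [monomial_mul, coeff_sum, coeff_monomial, exponent_iff, Finset.sum_ite_eq,
    Finset.mem_univ, if_true, ← Int.cast_mul, ← Units.val_mul, sign_mul]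
  simp [Fintype.card_perm, mul_comm]

/-- The factor at the pair `i < j` of the polynomial to which the Nullstellensatz is applied: it
vanishes if `x i ^ 2 = x j ^ 2` or `a i + x i = a j + x j`. The factor `X j + X i` is there only to
make the leading form the square `(X j ^ 2 - X i ^ 2) ^ 2`. -/
noncomputable def collisionFactor {ι R : Type*} [CommRing R] (a : ι → R) (i j : ι) :
    MvPolynomial ι R :=
  (X j ^ 2 - X i ^ 2) * ((X j - X i + C (a j - a i)) * (X j + X i))

theorem collisionFactor_eq {ι R : Type*} [CommRing R] (a : ι → R) (i j : ι) :
    collisionFactor a i j = (X j ^ 2 - X i ^ 2) ^ 2 +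
      C (a j - a i) * ((X j ^ 2 - X i ^ 2) * (X j + X i)) := by
  rw [collisionFactor]
  ring

theorem isHomogeneous_X_sq_sub_X_sq {ι R : Type*} [CommRing R] (i j : ι) :
    (X j ^ 2 - X i ^ 2 : MvPolynomial ι R).IsHomogeneous 2 :=
  ((isHomogeneous_X R j).pow 2).sub ((isHomogeneous_X R i).pow 2)

theorem isHomogeneous_X_sq_sub_X_sq_mul {ι R : Type*} [CommRing R] (i j : ι) :
    ((X j ^ 2 - X i ^ 2) * (X j + X i) : MvPolynomial ι R).IsHomogeneous 3 :=
  (isHomogeneous_X_sq_sub_X_sq i j).mul ((isHomogeneous_X R j).add (isHomogeneous_X R i))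

theorem totalDegree_collisionFactor_le {ι R : Type*} [CommRing R] (a : ι → R) (i j : ι) :
    (collisionFactor a i j).totalDegree ≤ 4 := by
  have hlin := (isHomogeneous_X_sq_sub_X_sq_mul (R := R) i j).totalDegree_le
  rw [collisionFactor_eq]
  refine (totalDegree_add _ _).trans
    (max_le ((isHomogeneous_X_sq_sub_X_sq i j).pow 2).totalDegree_le ?_)
  refine (totalDegree_mul _ _).trans ?_
  rw [totalDegree_C]
  omega

theorem homogeneousComponent_collisionFactor {ι R : Type*} [CommRing R] (a : ι → R) (i j : ι) :
    homogeneousComponent 4 (collisionFactor a i j) = (X j ^ 2 - X i ^ 2) ^ 2 := by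
  rw [collisionFactor_eq, map_add, homogeneousComponent_C_mul,
    homogeneousComponent_of_mem ((isHomogeneous_X_sq_sub_X_sq i j).pow 2),
    homogeneousComponent_of_mem (isHomogeneous_X_sq_sub_X_sq_mul i j)]
  simp

theorem sum_Ioi_four (l : ℕ) : ∑ i : Fin l, ∑ _j ∈ Finset.Ioi i, 4 = l * (2 * (l - 1)) := by
  simp only [Finset.sum_const, Fin.card_Ioi, smul_eq_mul]
  rw [← Finset.sum_range fun i ↦ (l - 1 - i) * 4, Finset.sum_range_reflect (fun i ↦ i * 4),
    ← Finset.sum_mul, show (4 : ℕ) = 2 * 2 from rfl, ← mul_assoc, Finset.sum_range_id_mul_two]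
  ring

theorem totalDegree_prod_collisionFactor_le {R : Type*} [CommRing R] {l : ℕ} (a : Fin l → R) :
    (∏ i, ∏ j ∈ Finset.Ioi i, collisionFactor a i j).totalDegree ≤ l * (2 * (l - 1)) := by
  rw [← sum_Ioi_four]
  exact (totalDegree_finsetProd _ _).trans <| Finset.sum_le_sum fun i _ ↦
    (totalDegree_finsetProd _ _).trans <| Finset.sum_le_sum fun j _ ↦
      totalDegree_collisionFactor_le a i j

theorem homogeneousComponent_prod_collisionFactor {R : Type*} [CommRing R] {l : ℕ}
    (a : Fin l → R) :
    homogeneousComponent (l * (2 * (l - 1))) (∏ i, ∏ j ∈ Finset.Ioi i, collisionFactor a i j) =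
      (Matrix.vandermonde fun i : Fin l ↦ (X i ^ 2 : MvPolynomial (Fin l) R)).det ^ 2 := by
  have inner (i : Fin l) : homogeneousComponent (∑ _j ∈ Finset.Ioi i, 4)
      (∏ j ∈ Finset.Ioi i, collisionFactor a i j) =
        (∏ j ∈ Finset.Ioi i, (X j ^ 2 - X i ^ 2)) ^ 2 := by
    rw [homogeneousComponent_sum_prod _ fun j _ ↦ totalDegree_collisionFactor_le a i j,
      ← Finset.prod_pow]
    exact Finset.prod_congr rfl fun j _ ↦ homogeneousComponent_collisionFactor a i j
  rw [← sum_Ioi_four, homogeneousComponent_sum_prod, Matrix.det_vandermonde, ← Finset.prod_pow]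
  · exact Finset.prod_congr rfl fun i _ ↦ inner i
  · exact fun i _ ↦ (totalDegree_finsetProd _ _).trans <| Finset.sum_le_sum fun j _ ↦
      totalDegree_collisionFactor_le a i j

theorem coeff_prod_collisionFactor {R : Type*} [CommRing R] {l : ℕ} (a : Fin l → R) :
    coeff (Finsupp.equivFunOnFinite.symm fun _ ↦ 2 * (l - 1))
      (∏ i, ∏ j ∈ Finset.Ioi i, collisionFactor a i j) =
      ((Equiv.Perm.sign (Fin.revPerm : Equiv.Perm (Fin l)) : ℤ) : R) * (l.factorial : R) := by
  rw [← coeff_det_vandermonde_X_pow_sq l two_pos, ← homogeneousComponent_prod_collisionFactor a,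
    coeff_homogeneousComponent, if_pos]
  simp [Finsupp.degree_eq_sum]

theorem exists_eval_prod_collisionFactor_ne_zero {K : Type*} [CommRing K] [IsDomain K] {l : ℕ}
    (hl : (l.factorial : K) ≠ 0) (a : Fin l → K) (S : Finset K) (hS : 2 * l ≤ S.card) :
    ∃ x : Fin l → K, (∀ i, x i ∈ S) ∧
      eval x (∏ i, ∏ j ∈ Finset.Ioi i, collisionFactor a i j) ≠ 0 := by
  have hcoeff : coeff (Finsupp.equivFunOnFinite.symm fun _ ↦ 2 * (l - 1))
      (∏ i, ∏ j ∈ Finset.Ioi i, collisionFactor a i j) ≠ 0 := by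
    rw [coeff_prod_collisionFactor]
    refine mul_ne_zero ?_ hl
    rcases Int.units_eq_one_or (Equiv.Perm.sign (Fin.revPerm : Equiv.Perm (Fin l))) with h | h <;>
      simp [h]
  refine combinatorial_nullstellensatz_exists_eval_nonzero _ _ hcoeff
    (le_antisymm ?_ ?_) (fun _ ↦ S) fun i ↦ ?_
  · simpa [Finsupp.degree_eq_sum] using totalDegree_prod_collisionFactor_le a
  · rw [Finsupp.degree_apply]
    exact le_totalDegree (mem_support_iff.2 hcoeff)
  · have := i.isLt
    rw [Finsupp.equivFunOnFinite_symm_apply_apply]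
    omega

theorem exists_sq_injective_add_injective {ι K : Type*} [Fintype ι] [CommRing K] [IsDomain K]
    (hι : ((Fintype.card ι).factorial : K) ≠ 0) (a : ι → K) (S : Finset K)
    (hS : 2 * Fintype.card ι ≤ S.card) :
    ∃ x : ι → K, (∀ i, x i ∈ S) ∧ Function.Injective (fun i ↦ x i ^ 2) ∧
      Function.Injective (fun i ↦ a i + x i) := by
  let e := Fintype.equivFin ι
  obtain ⟨x, hxS, hx⟩ := exists_eval_prod_collisionFactor_ne_zero hι (a ∘ e.symm) S hS
  simp only [map_prod, Finset.prod_ne_zero_iff, Finset.mem_univ, Finset.mem_Ioi, true_imp_iff,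
    collisionFactor, map_mul, map_sub, map_add, map_pow, eval_X, eval_C, mul_ne_zero_iff] at hx
  refine ⟨x ∘ e, fun i ↦ hxS _, ?_, ?_⟩
  · have hinj : Function.Injective fun i ↦ x i ^ 2 :=
      .of_lt_imp_ne fun i j hij h ↦ (hx i j hij).1 (sub_eq_zero.2 h.symm)
    exact hinj.comp e.injective
  · have hinj : Function.Injective fun i ↦ (a ∘ e.symm) i + x i :=
      .of_lt_imp_ne fun i j hij h ↦ (hx i j hij).2.1 (by linear_combination -h)
    simpa [Function.comp_def] using hinj.comp e.injective

end Polynomials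

section Darts

open SimpleGraph

variable {U : Type*}

/-- The darts of `G` both of whose ends lie in `s`. -/
def dartsWithin (G : SimpleGraph U) (s : Set U) : Set G.Dart :=
  {d | d.fst ∈ s ∧ d.snd ∈ s}

theorem card_dart_add_two_le [Fintype U] [Nonempty U] {G : SimpleGraph U} [DecidableRel G.Adj]
    (hG : G.IsAcyclic) : Fintype.card G.Dart + 2 ≤ 2 * Fintype.card U := by
  classical
  obtain ⟨T, hGT, -, hT⟩ := connected_top.exists_isTree_le_of_le_of_isAcyclic le_top hG
  have hle := Finset.card_le_card (edgeFinset_mono hGT)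
  have hcard := hT.card_edgeFinset
  rw [dart_card_eq_twice_card_edges]
  omega

theorem ncard_dartsWithin_add_two_le [Finite U] {G : SimpleGraph U} (hG : G.IsAcyclic) {s : Set U}
    (hs : s.Nonempty) : (dartsWithin G s).ncard + 2 ≤ 2 * s.ncard := by
  classical
  have := Fintype.ofFinite U
  have := hs.to_subtype
  have hrange : dartsWithin G s ⊆ Set.range (Embedding.induce (G := G) s).toHom.mapDart :=
    fun d hd ↦ ⟨⟨(⟨d.fst, hd.1⟩, ⟨d.snd, hd.2⟩), d.adj⟩, rfl⟩
  calc (dartsWithin G s).ncard + 2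
      ≤ (Set.range (Embedding.induce (G := G) s).toHom.mapDart).ncard + 2 :=
        Nat.add_le_add_right (Set.ncard_le_ncard hrange) 2
    _ ≤ Fintype.card (G.induce s).Dart + 2 := by
        rw [← Set.image_univ, ← Nat.card_eq_fintype_card, ← Set.ncard_univ]
        exact Nat.add_le_add_right Set.ncard_image_le 2
    _ ≤ 2 * Fintype.card s := card_dart_add_two_le (hG.induce s)
    _ = 2 * s.ncard := by rw [← Nat.card_eq_fintype_card, Nat.card_coe_set_eq]

theorem exists_ncard_inter_neighborSet_lt [Finite U] {G : SimpleGraph U} {k : ℕ} {s : Finset U}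
    (h : (dartsWithin G s).ncard < s.card * k) : ∃ v ∈ s, (↑s ∩ G.neighborSet v).ncard < k := by
  classical
  have := Fintype.ofFinite U
  rw [Set.ncard_eq_toFinset_card'] at h
  obtain ⟨v, hv, hlt⟩ :=
    Finset.exists_card_fiber_lt_of_card_lt_mul (f := fun d : G.Dart ↦ d.fst) h
  refine ⟨v, hv, lt_of_le_of_lt ?_ hlt⟩
  have hsub : ↑s ∩ G.neighborSet v ⊆
      (fun d : G.Dart ↦ d.snd) '' ↑{d ∈ (dartsWithin G s).toFinset | d.fst = v} :=
    fun w hw ↦ ⟨⟨(v, w), hw.2⟩, Finset.mem_filter.2 ⟨Set.mem_toFinset.2 ⟨hv, hw.1⟩, rfl⟩, rfl⟩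
  exact (Set.ncard_le_ncard hsub).trans ((Set.ncard_image_le).trans_eq (Set.ncard_coe_finset _))

theorem exists_ncard_inter_neighborSet_lt_two [Finite U] {G : SimpleGraph U} (hG : G.IsAcyclic)
    {s : Finset U} (hs : s.Nonempty) : ∃ v ∈ s, (↑s ∩ G.neighborSet v).ncard < 2 := by
  have := ncard_dartsWithin_add_two_le hG hs
  rw [Set.ncard_coe_finset] at this
  exact exists_ncard_inter_neighborSet_lt (by omega)

theorem ncard_dartsWithin_map_le {X : Type*} [Finite U] (G : SimpleGraph U) (f : U → X)
    (s : Set X) : (dartsWithin (G.map f) s).ncard ≤ (dartsWithin G (f ⁻¹' s)).ncard := by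
  classical
  have := Fintype.ofFinite U
  have hsub : Dart.toProd '' dartsWithin (G.map f) s ⊆
      (fun d ↦ (f d.fst, f d.snd)) '' dartsWithin G (f ⁻¹' s) := by
    rintro - ⟨⟨⟨x, y⟩, hne, u, v, huv, hu, hv⟩, hd, rfl⟩
    obtain rfl : f u = x := hu
    obtain rfl : f v = y := hv
    exact ⟨⟨(u, v), huv⟩, hd, rfl⟩
  rw [← Set.ncard_image_of_injective _ Dart.toProd_injective]
  exact (Set.ncard_le_ncard hsub).trans Set.ncard_image_le

theorem ncard_preimage_singleton_le_two {U X : Type*} [Finite U] {f : U → X} {Λ : Set U}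
    (hΛ : Set.InjOn f Λ) (hΛc : Set.InjOn f Λᶜ) (x : X) : (f ⁻¹' {x}).ncard ≤ 2 := by
  have hsub {s : Set U} (hs : Set.InjOn f s) : (f ⁻¹' {x} ∩ s).ncard ≤ 1 :=
    Set.ncard_le_one_iff_subsingleton.2 fun _ ha _ hb ↦ hs ha.2 hb.2 (ha.1.trans hb.1.symm)
  have hsplit := Set.ncard_inter_add_ncard_sdiff_eq_ncard (f ⁻¹' {x}) Λ
  have h₁ := hsub hΛ
  have h₂ := hsub hΛc
  rw [← Set.sdiff_eq] at h₂
  omega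

theorem ncard_preimage_finset_le_mul {X : Type*} [Finite U] {f : U → X} {k : ℕ}
    (hf : ∀ x, (f ⁻¹' {x}).ncard ≤ k) (s : Finset X) : (f ⁻¹' s).ncard ≤ k * s.card := by
  classical
  have := Fintype.ofFinite U
  rw [Set.ncard_eq_toFinset_card']
  refine Finset.card_le_mul_card_image_of_maps_to (f := f) (by simp) k fun x _ ↦ ?_
  refine le_trans ?_ (hf x)
  rw [← Set.ncard_coe_finset]
  exact Set.ncard_le_ncard fun u hu ↦ (Finset.mem_filter.1 hu).2

theorem exists_ncard_inter_neighborSet_map_lt {X : Type*} [Finite U] [Finite X]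
    {G : SimpleGraph U} (hG : G.IsAcyclic) {k : ℕ} (hk : 0 < k) {f : U → X}
    (hf : ∀ x, (f ⁻¹' {x}).ncard ≤ k) {s : Finset X} (hs : s.Nonempty) :
    ∃ x ∈ s, (↑s ∩ (G.map f).neighborSet x).ncard < 2 * k := by
  classical
  refine exists_ncard_inter_neighborSet_lt ((ncard_dartsWithin_map_le G f s).trans_lt ?_)
  have hpre := ncard_preimage_finset_le_mul hf s
  rcases (f ⁻¹' (s : Set X)).eq_empty_or_nonempty with hempty | hne
  · simpa [hempty, dartsWithin] using And.intro hs hk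
  · have := ncard_dartsWithin_add_two_le hG hne
    lia

theorem colorable_of_forall_exists_ncard_lt [Finite U] {G : SimpleGraph U} {k : ℕ}
    (h : ∀ s : Finset U, s.Nonempty → ∃ v ∈ s, (↑s ∩ G.neighborSet v).ncard < k) :
    G.Colorable k := by
  classical
  have := Fintype.ofFinite U
  rcases isEmpty_or_nonempty U with hU | hU
  · exact .of_isEmpty k
  obtain ⟨_, _, hk⟩ := h Finset.univ Finset.univ_nonempty
  have := Fin.pos_iff_nonempty.1 (Nat.zero_lt_of_lt hk)
  suffices H : ∀ s : Finset U, ∃ c : U → Fin k, ∀ v ∈ s, ∀ w ∈ s, G.Adj v w → c v ≠ c w by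
    obtain ⟨c, hc⟩ := H Finset.univ
    exact ⟨Coloring.mk c fun {v w} ↦ hc v (Finset.mem_univ v) w (Finset.mem_univ w)⟩
  intro s
  induction s using Finset.strongInduction with
  | H s ih =>
    rcases s.eq_empty_or_nonempty with rfl | hs
    · exact ⟨Classical.arbitrary _, by simp⟩
    obtain ⟨v, hv, hvk⟩ := h s hs
    obtain ⟨c, hc⟩ := ih (s.erase v) (Finset.erase_ssubset hv)
    obtain ⟨i, -, hi⟩ : ∃ i ∈ Set.univ, i ∉ c '' (↑s ∩ G.neighborSet v) :=
      Set.exists_mem_notMem_of_ncard_lt_ncard <| by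
        simpa using (Set.ncard_image_le).trans_lt hvk
    have hne : ∀ w ∈ s, G.Adj v w → Function.update c v i v ≠ Function.update c v i w := by
      intro w hw hvw
      rw [Function.update_self, Function.update_of_ne hvw.ne']
      exact fun hiw ↦ hi ⟨w, ⟨hw, hvw⟩, hiw.symm⟩
    refine ⟨Function.update c v i, fun u hu w hw huw ↦ ?_⟩
    rcases eq_or_ne u v with rfl | huv
    · exact hne w hw huw
    rcases eq_or_ne w v with rfl | hwv
    · exact (hne u hu huw.symm).symm
    rw [Function.update_of_ne huv, Function.update_of_ne hwv]
    exact hc u (Finset.mem_erase.2 ⟨huv, hu⟩) w (Finset.mem_erase.2 ⟨hwv, hw⟩) huw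

theorem colorable_map_of_isAcyclic [Finite U] {X : Type*} [Finite X] {G : SimpleGraph U}
    (hG : G.IsAcyclic) {k : ℕ} (hk : 0 < k) {f : U → X} (hf : ∀ x, (f ⁻¹' {x}).ncard ≤ k) :
    (G.map f).Colorable (2 * k) :=
  colorable_of_forall_exists_ncard_lt fun _ hs ↦
    exists_ncard_inter_neighborSet_map_lt hG hk hf hs

end Darts

section RainbowLabellings

open SimpleGraph

variable {U A : Type*} [AddCommGroup A] {G : SimpleGraph U} {f g : U → A} {s t : Set U}

/-- The difference of the labels of the two ends of a dart. -/
def dartDiff (f : U → A) (d : G.Dart) : A :=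
  f d.snd - f d.fst

/-- The labelling `f` is rainbow on `s` if distinct darts of `G` inside `s` have distinct
differences. Since a dart and its reverse have opposite differences, this says that the edges inside
`s` have pairwise distinct differences up to sign, none of which is its own negative. -/
def IsRainbowOn (G : SimpleGraph U) (f : U → A) (s : Set U) : Prop :=
  Set.InjOn (dartDiff f) (dartsWithin G s)

theorem dartDiff_symm (f : U → A) (d : G.Dart) : dartDiff f d.symm = -dartDiff f d :=
  (neg_sub _ _).symm

theorem symm_mem_dartsWithin {d : G.Dart} : d.symm ∈ dartsWithin G s ↔ d ∈ dartsWithin G s :=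
  and_comm

theorem eqOn_dartDiff (h : Set.EqOn f g s) :
    Set.EqOn (dartDiff f) (dartDiff g) (dartsWithin G s) :=
  fun d hd ↦ by rw [dartDiff, dartDiff, h hd.1, h hd.2]

theorem IsRainbowOn.congr (hf : IsRainbowOn G f s) (h : Set.EqOn f g s) : IsRainbowOn G g s :=
  Set.InjOn.congr hf (eqOn_dartDiff h)

theorem IsRainbowOn.dartDiff_ne_zero (hf : IsRainbowOn G f s) {d : G.Dart}
    (hd : d ∈ dartsWithin G s) : dartDiff f d ≠ 0 := by
  intro h
  refine d.symm_ne (hf (symm_mem_dartsWithin.2 hd) hd ?_)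
  rw [dartDiff_symm, h, neg_zero]

theorem IsRainbowOn.extend (hs : IsRainbowOn G f s) (h2 : ∀ a : A, a = -a → a = 0)
    (hzero : ∀ d ∈ dartsWithin G t, d.fst ∉ s → dartDiff f d ≠ 0)
    (hold : ∀ d ∈ dartsWithin G t, d.fst ∉ s → dartDiff f d ∉ dartDiff f '' dartsWithin G s)
    (hnew : ∀ d ∈ dartsWithin G t, ∀ e ∈ dartsWithin G t, d.fst ∉ s → e.fst ∉ s →
      (dartDiff f d = dartDiff f e ∨ dartDiff f d = -dartDiff f e) → d = e) :
    IsRainbowOn G f t := by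
  have eq_of_new : ∀ d ∈ dartsWithin G t, ∀ e ∈ dartsWithin G t, d.fst ∉ s →
      dartDiff f d = dartDiff f e → d = e := by
    intro d hd e he hds hde
    by_cases he₁ : e.fst ∈ s
    · by_cases he₂ : e.snd ∈ s
      · exact (hold d hd hds ⟨e, ⟨he₁, he₂⟩, hde.symm⟩).elim
      · have hneg : dartDiff f d = -dartDiff f e.symm := by rw [dartDiff_symm, neg_neg, hde]
        have hdsymm := hnew d hd e.symm (symm_mem_dartsWithin.2 he) hds he₂ (.inr hneg)
        rw [← hdsymm] at hneg
        exact (hzero d hd hds (h2 _ hneg)).elim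
    · exact hnew d hd e he hds he₁ (.inl hde)
  intro d hd e he hde
  have hde' : dartDiff f d.symm = dartDiff f e.symm := by rw [dartDiff_symm, dartDiff_symm, hde]
  have hd' := symm_mem_dartsWithin.2 hd
  have he' := symm_mem_dartsWithin.2 he
  by_cases hd₁ : d.fst ∈ s; swap
  · exact eq_of_new d hd e he hd₁ hde
  by_cases he₁ : e.fst ∈ s; swap
  · exact (eq_of_new e he d hd he₁ hde.symm).symm
  by_cases hd₂ : d.snd ∈ s; swap
  · exact Dart.symm_involutive.injective (eq_of_new d.symm hd' e.symm he' hd₂ hde')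
  by_cases he₂ : e.snd ∈ s; swap
  · exact Dart.symm_involutive.injective (eq_of_new e.symm he' d.symm hd' he₂ hde'.symm).symm
  exact hs ⟨hd₁, hd₂⟩ ⟨he₁, he₂⟩ hde

theorem exists_notMem_image_and_sub_notMem_dartDiff [Finite U] [Finite A] (hG : G.IsAcyclic)
    (f : U → A) {s : Set U} (hcard : 3 * s.ncard < Nat.card A + 2) (b : A) :
    ∃ a, a ∉ f '' s ∧ b - a ∉ dartDiff f '' dartsWithin G s := by
  classical
  have := Fintype.ofFinite U
  set diffs := dartDiff f '' dartsWithin G s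
  suffices hlt : (f '' s ∪ (b - ·) '' diffs).ncard < (Set.univ : Set A).ncard by
    obtain ⟨a, -, ha⟩ := Set.exists_mem_notMem_of_ncard_lt_ncard hlt
    rw [Set.mem_union, not_or] at ha
    exact ⟨a, ha.1, fun h ↦ ha.2 ⟨b - a, h, sub_sub_cancel b a⟩⟩
  rw [Set.ncard_univ]
  rcases s.eq_empty_or_nonempty with rfl | hs
  · simp [diffs, dartsWithin, Nat.card_pos]
  · have hunion := Set.ncard_union_le (f '' s) ((b - ·) '' diffs)
    have hlabels := Set.ncard_image_le (f := f) s.toFinite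
    have hdiffs : diffs.ncard ≤ _ := Set.ncard_image_le (dartsWithin G s).toFinite
    have hshift := Set.ncard_image_le (f := (b - ·)) diffs.toFinite
    have := ncard_dartsWithin_add_two_le hG hs
    omega

theorem IsRainbowOn.exists_insert [Finite U] [Finite A] (h2 : ∀ a : A, a = -a → a = 0)
    (hG : G.IsAcyclic) (hf : IsRainbowOn G f s) (hinj : Set.InjOn f s) {w q : U} (hw : w ∉ s)
    (hq : s ∩ G.neighborSet w ⊆ {q}) (hcard : 3 * s.ncard < Nat.card A + 2) :
    ∃ f : U → A, Set.InjOn f (insert w s) ∧ IsRainbowOn G f (insert w s) := by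
  classical
  obtain ⟨a, halabel, hadiff⟩ := exists_notMem_image_and_sub_notMem_dartDiff hG f hcard (f q)
  have heq : Set.EqOn f (Function.update f w a) s := fun u hu ↦
    (Function.update_of_ne (ne_of_mem_of_not_mem hu hw) a f).symm
  have new_dart {d : G.Dart} (hd : d ∈ dartsWithin G (insert w s)) (hds : d.fst ∉ s) :
      q ∈ s ∧ d.toProd = (w, q) ∧ dartDiff (Function.update f w a) d = f q - a := by
    have hfst : d.fst = w := hd.1.resolve_right hds
    have hsnd : d.snd ∈ s := hd.2.resolve_left fun h ↦ d.fst_ne_snd (hfst.trans h.symm)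
    obtain rfl : d.snd = q := hq ⟨hsnd, hfst ▸ d.adj⟩
    exact ⟨hsnd, Prod.ext hfst rfl, by rw [dartDiff, ← heq hsnd, hfst, Function.update_self]⟩
  refine ⟨Function.update f w a, ?_, (hf.congr heq).extend h2 ?_ ?_ ?_⟩
  · rw [Set.injOn_insert hw, Function.update_self, ← heq.image_eq]
    exact ⟨heq.injOn_iff.1 hinj, halabel⟩
  · intro d hd hds h0
    obtain ⟨hqs, -, hdiff⟩ := new_dart hd hds
    exact halabel ⟨q, hqs, sub_eq_zero.1 (hdiff.symm.trans h0)⟩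
  · intro d hd hds hold
    obtain ⟨-, -, hdiff⟩ := new_dart hd hds
    rw [hdiff, ← (eqOn_dartDiff heq).image_eq] at hold
    exact hadiff hold
  · intro d hd e he hds hes _
    exact Dart.ext _ _ ((new_dart hd hds).2.1.trans (new_dart he hes).2.1.symm)

theorem exists_injOn_isRainbowOn [Finite U] [Finite A] (h2 : ∀ a : A, a = -a → a = 0)
    (hG : G.IsAcyclic) (s : Finset U) (hcard : 3 * s.card ≤ Nat.card A + 4) :
    ∃ f : U → A, Set.InjOn f s ∧ IsRainbowOn G f s := by
  classical
  induction s using Finset.strongInduction with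
  | H s ih =>
    rcases s.eq_empty_or_nonempty with rfl | hs
    · exact ⟨0, by simp, fun d hd ↦ (Finset.notMem_empty _ hd.1).elim⟩
    obtain ⟨w, hw, hlt⟩ := exists_ncard_inter_neighborSet_lt_two hG hs
    have := Finset.card_erase_add_one hw
    obtain ⟨f, hinj, hf⟩ := ih (s.erase w) (Finset.erase_ssubset hw) (by omega)
    have : Nonempty U := ⟨w⟩
    obtain ⟨q, hq⟩ := (Set.ncard_le_one_iff_subset_singleton).1 (Nat.le_of_lt_succ hlt)
    rw [← Finset.insert_erase hw, Finset.coe_insert]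
    refine hf.exists_insert h2 hG hinj (q := q) (Finset.notMem_erase w s) ?_ ?_
    · exact (Set.inter_subset_inter_left _ (Finset.coe_subset.2 (s.erase_subset w))).trans hq
    · rw [Set.ncard_coe_finset]
      omega

theorem le_ncard_compl_insert_zero_dartDiff [Finite U] [Finite A] (hG : G.IsAcyclic) (f : U → A)
    {Λ : Set U} (hne : Λᶜ.Nonempty) (hsize : 2 * Nat.card U ≤ Nat.card A + 1) :
    2 * Λ.ncard ≤ (insert 0 (dartDiff f '' dartsWithin G Λᶜ))ᶜ.ncard := by
  classical
  have := Fintype.ofFinite U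
  have hdarts := ncard_dartsWithin_add_two_le hG hne
  have hdiffs := Set.ncard_image_le (f := dartDiff f) (dartsWithin G Λᶜ).toFinite
  have hinsert := Set.ncard_insert_le (0 : A) (dartDiff f '' dartsWithin G Λᶜ)
  have hcompl := Set.ncard_add_ncard_compl (insert (0 : A) (dartDiff f '' dartsWithin G Λᶜ))
  have hΛ := Set.ncard_add_ncard_compl Λ
  omega

theorem eq_zero_of_eq_neg {K : Type*} [Ring K] [NoZeroDivisors K] (h2 : (2 : K) ≠ 0) {a : K}
    (h : a = -a) : a = 0 :=
  (mul_eq_zero.1 ((two_mul a).trans (eq_neg_iff_add_eq_zero.1 h))).resolve_left h2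

theorem IsRainbowOn.extend_leaves {K : Type*} [CommRing K] [IsDomain K] (h2 : (2 : K) ≠ 0)
    {Λ : Set U} (hleaf : ∀ v ∈ Λ, (G.neighborSet v).ncard = 1) {f : U → K}
    (hf : IsRainbowOn G f Λᶜ) {x : Λ → K}
    (hdiff : ∀ (d : G.Dart) (hd : d.fst ∈ Λ), dartDiff f d = -x ⟨d.fst, hd⟩)
    (hx0 : ∀ v, x v ≠ 0) (hxold : ∀ v, x v ∉ dartDiff f '' dartsWithin G Λᶜ)
    (hxsq : Function.Injective fun v ↦ x v ^ 2) : IsRainbowOn G f Set.univ := by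
  refine hf.extend (fun _ ↦ eq_zero_of_eq_neg h2) ?_ ?_ ?_
  · intro d _ hd
    rw [hdiff d (not_not.1 hd)]
    exact neg_ne_zero.2 (hx0 _)
  · rintro d - hd ⟨e, he, hed⟩
    rw [hdiff d (not_not.1 hd)] at hed
    exact hxold _ ⟨e.symm, symm_mem_dartsWithin.2 he, by rw [dartDiff_symm, hed, neg_neg]⟩
  · intro d _ e _ hd he hde
    rw [hdiff d (not_not.1 hd), hdiff e (not_not.1 he), ← sq_eq_sq_iff_eq_or_eq_neg, neg_sq,
      neg_sq] at hde
    have hfst : d.fst = e.fst := congrArg Subtype.val (hxsq hde)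
    obtain ⟨q, hq⟩ := Set.ncard_eq_one.1 (hleaf d.fst (not_not.1 hd))
    have hdq : d.snd ∈ ({q} : Set U) := hq ▸ d.adj
    have heq : e.snd ∈ ({q} : Set U) := hq ▸ hfst ▸ e.adj
    exact Dart.ext _ _ (Prod.ext hfst (hdq.trans heq.symm))

theorem compl_nonempty_of_leaves [Nonempty U] {Λ : Set U}
    (hleaf : ∀ v ∈ Λ, (G.neighborSet v).ncard = 1) (hind : ∀ v ∈ Λ, ∀ w ∈ Λ, ¬G.Adj v w) :
    Λᶜ.Nonempty := by
  by_contra hempty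
  rw [Set.not_nonempty_iff_eq_empty, Set.compl_empty_iff] at hempty
  obtain ⟨v⟩ := ‹Nonempty U›
  obtain ⟨w, hvw⟩ := Set.nonempty_of_ncard_ne_zero
    (hleaf v (hempty ▸ Set.mem_univ v) ▸ one_ne_zero)
  exact hind v (hempty ▸ Set.mem_univ v) w (hempty ▸ Set.mem_univ w) hvw

theorem IsRainbowOn.exists_extend_leaves {K : Type*} [CommRing K] [IsDomain K] [Finite K]
    [Finite U] [Nonempty U] (h2 : (2 : K) ≠ 0) (hG : G.IsAcyclic) {Λ : Set U}
    (hleaf : ∀ v ∈ Λ, (G.neighborSet v).ncard = 1) (hind : ∀ v ∈ Λ, ∀ w ∈ Λ, ¬G.Adj v w)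
    (hfact : (Λ.ncard.factorial : K) ≠ 0) (hsize : 2 * Nat.card U ≤ Nat.card K + 1)
    {g : U → K} (hg : IsRainbowOn G g Λᶜ) :
    ∃ f : U → K, Set.EqOn g f Λᶜ ∧ Set.InjOn f Λ ∧ IsRainbowOn G f Set.univ := by
  classical
  have := Fintype.ofFinite U
  have := Fintype.ofFinite K
  have hfree := le_ncard_compl_insert_zero_dartDiff hG g (compl_nonempty_of_leaves hleaf hind) hsize
  choose q hq using fun v : Λ ↦ Set.ncard_eq_one.1 (hleaf v v.2)
  rw [← Nat.card_coe_set_eq Λ, Nat.card_eq_fintype_card] at hfact hfree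
  rw [Set.ncard_eq_toFinset_card'] at hfree
  obtain ⟨x, hx, hxsq, hxinj⟩ := exists_sq_injective_add_injective hfact (fun v ↦ g (q v)) _ hfree
  simp only [Set.mem_toFinset, Set.mem_compl_iff, Set.mem_insert_iff, not_or] at hx
  set f : U → K := fun v ↦ if hv : v ∈ Λ then g (q ⟨v, hv⟩) + x ⟨v, hv⟩ else g v
  have hfΛ {v : U} (hv : v ∈ Λ) : f v = g (q ⟨v, hv⟩) + x ⟨v, hv⟩ := dif_pos hv
  have hgf : Set.EqOn g f Λᶜ := fun v hv ↦ by simp only [f, dif_neg hv]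
  have hdiff (d : G.Dart) (hd : d.fst ∈ Λ) : dartDiff f d = -x ⟨d.fst, hd⟩ := by
    have hsnd : d.snd ∈ ({q ⟨d.fst, hd⟩} : Set U) := hq ⟨d.fst, hd⟩ ▸ d.adj
    rw [dartDiff, hfΛ hd, ← hgf fun h ↦ hind _ hd _ h d.adj, Set.mem_singleton_iff.1 hsnd,
      sub_add_cancel_left]
  refine ⟨f, hgf, fun v hv w hw hvw ↦ ?_, (hg.congr hgf).extend_leaves h2 hleaf hdiff
    (fun v ↦ (hx v).1) (fun v ↦ ?_) hxsq⟩
  · rw [hfΛ hv, hfΛ hw] at hvw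
    exact congrArg Subtype.val (hxinj hvw)
  · rw [← (eqOn_dartDiff hgf).image_eq]
    exact (hx v).2

theorem exists_isRainbowOn_univ {K : Type*} [CommRing K] [IsDomain K] [Finite K] [Finite U]
    [Nonempty U] (h2 : (2 : K) ≠ 0) (hG : G.IsAcyclic) {Λ : Set U}
    (hleaf : ∀ v ∈ Λ, (G.neighborSet v).ncard = 1) (hind : ∀ v ∈ Λ, ∀ w ∈ Λ, ¬G.Adj v w)
    (hfact : (Λ.ncard.factorial : K) ≠ 0) (hsize : 2 * Nat.card U ≤ Nat.card K + 1)
    (hcore : 3 * Λᶜ.ncard ≤ Nat.card K + 4) :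
    ∃ f : U → K, IsRainbowOn G f Set.univ ∧ Set.InjOn f Λ ∧ Set.InjOn f Λᶜ := by
  classical
  have := Fintype.ofFinite U
  obtain ⟨g, hginj, hg⟩ := exists_injOn_isRainbowOn (fun _ ↦ eq_zero_of_eq_neg h2) hG
    Λᶜ.toFinset (by rwa [← Set.ncard_eq_toFinset_card'])
  rw [Set.coe_toFinset] at hginj hg
  obtain ⟨f, hgf, hfinj, hf⟩ := hg.exists_extend_leaves h2 hG hleaf hind hfact hsize
  exact ⟨f, hf, hfinj, hginj.congr hgf⟩

theorem not_adj_of_leaves [Finite U] (hG : G.Connected) (hU : 2 < Nat.card U) {v w : U}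
    (hv : (G.neighborSet v).ncard = 1) (hw : (G.neighborSet w).ncard = 1) : ¬G.Adj v w := by
  intro hvw
  obtain ⟨w', hNv⟩ := Set.ncard_eq_one.1 hv
  obtain ⟨v', hNw⟩ := Set.ncard_eq_one.1 hw
  obtain rfl : w = w' := by
    simpa using (hNv ▸ hvw : w ∈ ({w'} : Set U))
  obtain rfl : v = v' := by
    simpa using (hNw ▸ hvw.symm : v ∈ ({v'} : Set U))
  obtain ⟨u, -, hu⟩ : ∃ u ∈ Set.univ, u ∉ ({v, w} : Set U) := by
    refine Set.exists_mem_notMem_of_ncard_lt_ncard (lt_of_le_of_lt (Set.ncard_insert_le _ _) ?_)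
    rwa [Set.ncard_singleton, Set.ncard_univ]
  obtain ⟨p⟩ := hG v u
  obtain ⟨d, -, hd, hd'⟩ := p.exists_boundary_dart {v, w} (by simp) hu
  rcases hd with hd | hd
  · have : d.snd ∈ ({w} : Set U) := hNv ▸ hd ▸ d.adj
    exact hd' (.inr this)
  · have : d.snd ∈ ({v} : Set U) := hNw ▸ Set.mem_singleton_iff.1 hd ▸ d.adj
    exact hd' (.inl this)

theorem exists_isRainbowOn_univ_of_isTree {m : ℕ} (hm : (2 * m + 1).Prime) [Finite U]
    (hG : G.IsTree) (hU : Nat.card U = m + 1)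
    (hleaves : m ≤ 3 * {v | (G.neighborSet v).ncard = 1}.ncard + 2) :
    ∃ (f : U → ZMod (2 * m + 1)) (Λ : Set U),
      IsRainbowOn G f Set.univ ∧ Set.InjOn f Λ ∧ Set.InjOn f Λᶜ := by
  have : Fact (2 * m + 1).Prime := ⟨hm⟩
  have := hG.connected.nonempty
  have h2 : (2 : ZMod (2 * m + 1)) ≠ 0 := by
    refine Ring.two_ne_zero ?_
    rw [ZMod.ringChar_zmod_n]
    omega
  obtain ⟨Λ, hleaf, hind, hΛ⟩ : ∃ Λ : Set U, (∀ v ∈ Λ, (G.neighborSet v).ncard = 1) ∧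
      (∀ v ∈ Λ, ∀ w ∈ Λ, ¬G.Adj v w) ∧ m ≤ 3 * Λ.ncard + 2 := by
    rcases le_or_gt m 2 with hm2 | hm2
    · exact ⟨∅, by simp, by simp, by simpa using hm2⟩
    · exact ⟨{v | (G.neighborSet v).ncard = 1}, fun v hv ↦ hv,
        fun v hv w hw ↦ not_adj_of_leaves hG.connected (by omega) hv hw, hleaves⟩
  have hcard := Set.ncard_add_ncard_compl Λ
  have hfact : (Λ.ncard.factorial : ZMod (2 * m + 1)) ≠ 0 := by
    rw [Ne, ZMod.natCast_eq_zero_iff, hm.dvd_factorial]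
    have := hm.two_le
    omega
  obtain ⟨f, hf⟩ := exists_isRainbowOn_univ h2 hG.isAcyclic hleaf hind hfact
    (by rw [Nat.card_zmod]; omega) (by rw [Nat.card_zmod]; omega)
  exact ⟨f, Λ, hf⟩

theorem IsRainbowOn.bijOn_dartDiff [Finite U] [Finite A] (hf : IsRainbowOn G f Set.univ)
    (hcard : 2 * G.edgeSet.ncard + 1 = Nat.card A) :
    Set.BijOn (dartDiff f : G.Dart → A) Set.univ {0}ᶜ := by
  classical
  have := Fintype.ofFinite U
  have := Fintype.ofFinite A
  have huniv : dartsWithin G Set.univ = Set.univ := Set.eq_univ_of_forall fun _ ↦ ⟨trivial, trivial⟩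
  have hmaps : Set.MapsTo (dartDiff f : G.Dart → A) Set.univ {0}ᶜ := fun d _ ↦
    hf.dartDiff_ne_zero (huniv ▸ Set.mem_univ d)
  have hinj : Set.InjOn (dartDiff f : G.Dart → A) Set.univ := huniv ▸ hf
  refine ⟨hmaps, hinj, (Set.eq_of_subset_of_ncard_le hmaps.image_subset ?_).ge⟩
  have hdarts : (Set.univ : Set G.Dart).ncard = 2 * G.edgeSet.ncard := by
    rw [Set.ncard_univ, Nat.card_eq_fintype_card, dart_card_eq_twice_card_edges,
      ← coe_edgeFinset, Set.ncard_coe_finset]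
  have hcompl := Set.ncard_add_ncard_compl ({0} : Set A)
  rw [Set.ncard_singleton] at hcompl
  rw [hinj.ncard_image, hdarts]
  omega

theorem ncard_edgeSet_add_one {U : Type*} [Finite U] {G : SimpleGraph U} (hG : G.IsTree) :
    G.edgeSet.ncard + 1 = Nat.card U :=
  (isTree_iff_connected_and_card.1 hG).2

theorem exists_bijOn_dartDiff_of_isTree {U : Type*} [Finite U] {G : SimpleGraph U} {m : ℕ}
    (hm : (2 * m + 1).Prime) (hG : G.IsTree) (hU : Nat.card U = m + 1)
    (hleaves : m ≤ 3 * {v | (G.neighborSet v).ncard = 1}.ncard + 2) :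
    ∃ (f : U → ZMod (2 * m + 1)) (Λ : Set U),
      Set.BijOn (dartDiff f : G.Dart → _) Set.univ {0}ᶜ ∧ Set.InjOn f Λ ∧ Set.InjOn f Λᶜ := by
  obtain ⟨f, Λ, hf, hΛ, hΛc⟩ := exists_isRainbowOn_univ_of_isTree hm hG hU hleaves
  refine ⟨f, Λ, hf.bijOn_dartDiff ?_, hΛ, hΛc⟩
  rw [Nat.card_zmod]
  have := ncard_edgeSet_add_one hG
  omega

end RainbowLabellings

section Forms

variable {R : Type*} [CommRing R]

/-- Coefficient vectors of four linear forms on `R × R`, which are pairwise independent as soon as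
`2` is a unit of `R`. -/
def formCoeff : Fin 4 → R × R :=
  ![(1, 0), (0, 1), (1, 1), (1, -1)]

/-- The linear form on `R × R` with coefficient vector `a`. -/
def linearForm (a s : R × R) : R :=
  a.1 * s.1 + a.2 * s.2

theorem bijective_linearForm_prod {a b : R × R} (h : IsUnit (a.1 * b.2 - a.2 * b.1)) :
    Function.Bijective fun s ↦ (linearForm a s, linearForm b s) := by
  obtain ⟨c, hc⟩ := h.exists_right_inv
  refine Function.bijective_iff_has_inverse.2
    ⟨fun x ↦ (c * (b.2 * x.1 - a.2 * x.2), c * (a.1 * x.2 - b.1 * x.1)),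
      fun s ↦ Prod.ext ?_ ?_, fun x ↦ Prod.ext ?_ ?_⟩ <;> simp only [linearForm]
  · linear_combination s.1 * hc
  · linear_combination s.2 * hc
  · linear_combination x.1 * hc
  · linear_combination x.2 * hc

theorem isUnit_det_formCoeff (h2 : IsUnit (2 : R)) {i j : Fin 4} (hij : i ≠ j) :
    IsUnit ((formCoeff i : R × R).1 * (formCoeff j).2 - (formCoeff i).2 * (formCoeff j).1) := by
  have h2' : IsUnit (-2 : R) := h2.neg
  have hneg : -1 - (1 : R) = -2 := by ring
  have hpos : (1 : R) + 1 = 2 := one_add_one_eq_two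
  fin_cases i <;> fin_cases j <;> first
    | exact (hij rfl).elim
    | simp [formCoeff, hneg, hpos, h2, h2']

end Forms

section HalfSystems

variable {R : Type*} [AddGroup R] {P : Set R}

/-- A half system of an additive group contains exactly one element of each pair `{a, -a}` with
`a ≠ 0`, and does not contain `0`. -/
structure IsHalfSystem (P : Set R) : Prop where
  zero_notMem : 0 ∉ P
  neg_mem_iff {a : R} (ha : a ≠ 0) : -a ∈ P ↔ a ∉ P

theorem IsHalfSystem.compl_eq (hP : IsHalfSystem P) : Pᶜ = insert 0 (Neg.neg '' P) := by
  ext a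
  rcases eq_or_ne a 0 with rfl | ha
  · simpa using hP.zero_notMem
  · simp [ha, hP.neg_mem_iff]

theorem IsHalfSystem.ncard_compl [Finite R] (hP : IsHalfSystem P) : Pᶜ.ncard = P.ncard + 1 := by
  rw [hP.compl_eq, Set.ncard_insert_of_notMem, Set.ncard_image_of_injective _ neg_injective]
  simpa using hP.zero_notMem

theorem isHalfSystem_valMinAbs_pos {r : ℕ} (hr : Odd r) :
    IsHalfSystem {a : ZMod r | 0 < a.valMinAbs} where
  zero_notMem := by simp
  neg_mem_iff {a} ha := by
    have hval : a.valMinAbs ≠ 0 := (ZMod.valMinAbs_eq_zero a).not.2 ha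
    have hhalf : 2 * a.val ≠ r := fun h ↦ Nat.not_even_iff_odd.2 hr ⟨a.val, by omega⟩
    simp only [Set.mem_ofPred_eq, ZMod.valMinAbs_neg_of_ne_half hhalf]
    omega

theorem exists_isHalfSystem {r : ℕ} (hr : 1 < r) (hodd : Odd r) :
    ∃ P : Set (ZMod r), IsHalfSystem P ∧ 2 * Pᶜ.ncard = r + 1 ∧ 1 ∈ P := by
  have : NeZero r := ⟨by omega⟩
  have hP := isHalfSystem_valMinAbs_pos hodd
  refine ⟨_, hP, ?_, ?_⟩
  · have hcompl := Set.ncard_add_ncard_compl {a : ZMod r | 0 < a.valMinAbs}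
    rw [Nat.card_zmod] at hcompl
    have := hP.ncard_compl
    omega
  · have hval : ((1 : ℕ) : ZMod r).valMinAbs = (1 : ℕ) :=
      ZMod.valMinAbs_natCast_of_le_half (by omega)
    rw [Nat.cast_one] at hval
    rw [Set.mem_ofPred_eq, hval]
    exact Int.one_pos

end HalfSystems

section Decompositions

open SimpleGraph

theorem Decomposes.congr {α α' β β' : Type} {H : SimpleGraph α} {H' : SimpleGraph α'}
    {G : SimpleGraph β} {G' : SimpleGraph β'} (e : H ≃g H') (e' : G ≃g G') :
    Decomposes H G → Decomposes H' G' := by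
  rintro ⟨ι, f, hinj, hadj, huniq⟩
  refine ⟨ι, fun i ↦ e' ∘ f i ∘ e.symm, fun i ↦ ?_, fun i a b hab ↦ ?_, fun q hq ↦ ?_⟩
  · exact e'.injective.comp ((hinj i).comp e.symm.injective)
  · exact e'.map_adj_iff.2 (hadj i _ _ (e.symm.map_adj_iff.2 hab))
  · obtain ⟨⟨i, x⟩, ⟨hx, hix⟩, hunique⟩ := huniq _ (e'.symm.map_mem_edgeSet_iff.2 hq)
    refine ⟨(i, x.map e), ⟨e.map_mem_edgeSet_iff.2 hx, ?_⟩, fun ⟨j, x'⟩ ⟨hx', hjx'⟩ ↦ ?_⟩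
    · apply_fun Sym2.map e' at hix
      simpa [Sym2.map_map, Function.comp_def] using hix
    · have heq := hunique (j, x'.map e.symm) ⟨e.symm.map_mem_edgeSet_iff.2 hx', by
        simp [← hjx', Sym2.map_map, Function.comp_def]⟩
      rw [Prod.mk.injEq] at heq ⊢
      exact ⟨heq.1, by simp [← heq.2, Sym2.map_map]⟩

theorem decomposes_of_map {α β ι : Type} {H : SimpleGraph α} {G : SimpleGraph β} (f : ι → α → β)
    (hinj : ∀ i, Function.Injective (f i)) (hle : ∀ i, H.map (f i) ≤ G)
    (huniq : ∀ x y, G.Adj x y → ∃! i, (H.map (f i)).Adj x y) : Decomposes H G := by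
  have map_adj (i : ι) {a b : α} (hab : H.Adj a b) : (H.map (f i)).Adj (f i a) (f i b) :=
    map_adj_apply (f := ⟨f i, hinj i⟩) |>.2 hab
  refine ⟨ι, f, hinj, fun i a b hab ↦ hle i (map_adj i hab), Sym2.ind fun x y hxy ↦ ?_⟩
  obtain ⟨i, ⟨-, a, b, hab, rfl, rfl⟩, hi⟩ := huniq x y hxy
  refine ⟨(i, s(a, b)), ⟨hab, rfl⟩, fun ⟨j, e⟩ ⟨he, hej⟩ ↦ ?_⟩
  obtain rfl : j = i := by
    refine hi j ?_
    induction e with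
    | _ a' b' => exact (mem_edgeSet _).1 (hej ▸ map_adj j he)
  exact congrArg _ (Sym2.map.injective (hinj j) hej)

/-- The complete graph with the edges inside `W` deleted. -/
def completeMinusClique {β : Type*} (W : Set β) : SimpleGraph β :=
  (⊤ : SimpleGraph β).deleteEdges {e | ∀ v ∈ e, v ∈ W}

theorem completeMinusClique_adj {β : Type*} {W : Set β} {x y : β} :
    (completeMinusClique W).Adj x y ↔ x ≠ y ∧ (x ∈ W → y ∉ W) := by
  simp [completeMinusClique]

theorem nonempty_completeMinusClique_iso {B C β : Type*} [Finite β] [Finite B] [Finite C]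
    {W : Set β} (hB : Nat.card B = W.ncard) (hC : Nat.card C + W.ncard = Nat.card β) :
    Nonempty (completeMinusClique (Set.range (Sum.inl : B → B ⊕ C)) ≃g completeMinusClique W) := by
  classical
  have hcompl := Set.ncard_add_ncard_compl W
  obtain ⟨eB⟩ : Nonempty (B ≃ W) := Finite.card_eq.1 hB
  obtain ⟨eC⟩ : Nonempty (C ≃ (Wᶜ : Set β)) := Finite.card_eq.1 (by
    rw [Nat.card_coe_set_eq]; omega)
  set e := (Equiv.sumCongr eB eC).trans (Equiv.Set.sumCompl W)
  have hW (x : B ⊕ C) : e x ∈ W ↔ x ∈ Set.range Sum.inl := by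
    rcases x with b | c
    · simp [e]
    · simpa [e] using (Set.mem_compl_iff W _).1 (eC c).2
  exact ⟨⟨e, by simp only [completeMinusClique_adj, e.injective.ne_iff, hW, implies_true]⟩⟩

/-- The graph obtained from `G` by joining the new vertex `none` to `y`. -/
def addPendant {U : Type*} (G : SimpleGraph U) (y : U) : SimpleGraph (Option U) :=
  G.map some ⊔ edge none (some y)

section AddPendant

variable {U : Type*} {G : SimpleGraph U} {y u v : U}

theorem addPendant_adj_some_some : (addPendant G y).Adj (some u) (some v) ↔ G.Adj u v := by
  simpa [addPendant, edge_adj] using map_adj_apply (f := Function.Embedding.some)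

theorem addPendant_adj_none_some : (addPendant G y).Adj none (some v) ↔ v = y := by
  simp [addPendant, edge_adj, map_adj']

theorem exists_addPendant_induce_iso {z : U} (hz : (G.neighborSet z).ncard = 1) :
    ∃ y, Nonempty (addPendant (G.induce {w | w ≠ z}) y ≃g G) := by
  classical
  obtain ⟨y, hy⟩ := Set.ncard_eq_one.1 hz
  have hadj (v : U) : G.Adj z v ↔ v = y := by
    rw [← mem_neighborSet, hy, Set.mem_singleton_iff]
  refine ⟨⟨y, ((hadj y).2 rfl).ne'⟩, ⟨Equiv.optionSubtypeNe z, ?_⟩⟩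
  rintro (_ | u) (_ | v)
  · simp
  · rw [addPendant_adj_none_some, Subtype.ext_iff]
    exact hadj v
  · rw [adj_comm, adj_comm (addPendant _ _), addPendant_adj_none_some, Subtype.ext_iff]
    exact hadj u
  · rw [addPendant_adj_some_some]
    rfl

theorem isTree_induce_of_leaf {U : Type*} [Finite U] {G : SimpleGraph U} (hG : G.IsTree) {z : U}
    (hz : (G.neighborSet z).ncard = 1) : (G.induce {w | w ≠ z}).IsTree := by
  classical
  have := Fintype.ofFinite U
  refine ⟨hG.connected.induce_compl_singleton_of_degree_eq_one ?_, hG.isAcyclic.induce _⟩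
  rwa [Set.ncard_eq_toFinset_card'] at hz

end AddPendant

end Decompositions

section CopySchemes

open SimpleGraph

/-- The data of a family of copies, indexed by `A × S`, of the graph `addPendant G y` on the vertex
set `Pᶜ ⊕ A × R`: the copy with index `(a, s)` puts `u` at height `height u s` in the column
`label u + a`, and the pendant vertex at height `drop s` below `y` if `drop s ∈ P`, and at the
vertex `drop s` of `Pᶜ` otherwise. -/
structure CopyScheme {U R : Type*} [AddCommGroup R] (G : SimpleGraph U) (y : U)
    (A : Type*) [AddCommGroup A] (P : Set R) (S : Type*) where
  label : U → A
  height : U → S → R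
  drop : S → R
  bijOn_dartDiff : Set.BijOn (dartDiff label : G.Dart → A) Set.univ {0}ᶜ
  bijective_height {u v : U} (huv : G.Adj u v) : Function.Bijective fun s ↦ (height u s, height v s)
  bijective_drop : Function.Bijective fun s ↦ (height y s, drop s)
  height_ne {u v : U} (huv : u ≠ v) (h : label u = label v) (s : S) : height u s ≠ height v s
  height_sub_notMem {u : U} (h : label u = label y) (s : S) : height y s - height u s ∉ P

namespace CopyScheme

variable {U A R S : Type*} [AddCommGroup A] [AddCommGroup R] {G : SimpleGraph U} {y : U} {P : Set R}
  (B : CopyScheme G y A P S) (i : A × S)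

/-- The position of the vertex `u` of `G` in the copy with index `i`. -/
def point (u : U) : A × R :=
  (B.label u + i.1, B.height u i.2)

open Classical in
/-- The copy of `addPendant G y` with index `i`, the pendant vertex being `none`. -/
noncomputable def copy : Option U → ↥Pᶜ ⊕ A × R
  | some u => .inr (B.point i u)
  | none => if h : B.drop i.2 ∈ P then .inr (B.point i y - (0, B.drop i.2)) else .inl ⟨_, h⟩

theorem copy_none_eq_inr {a : A × R} :
    B.copy i none = .inr a ↔ B.drop i.2 ∈ P ∧ B.point i y - (0, B.drop i.2) = a := by
  by_cases h : B.drop i.2 ∈ P <;> simp [copy, h]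

theorem copy_none_eq_inl {c : ↥Pᶜ} : B.copy i none = .inl c ↔ B.drop i.2 = c := by
  by_cases h : B.drop i.2 ∈ P
  · simpa [copy, h] using ne_of_mem_of_not_mem h c.2
  · simp [copy, h, Subtype.ext_iff]

theorem injective_point : Function.Injective (B.point i) := by
  intro u v huv
  by_contra hne
  rw [point, point, Prod.mk.injEq, add_left_inj] at huv
  exact B.height_ne hne huv.1 i.2 huv.2

theorem injective_copy : Function.Injective (B.copy i) := by
  have some_ne_none (u : U) : B.copy i (some u) ≠ B.copy i none := by
    intro h
    obtain ⟨hP, hu⟩ := (B.copy_none_eq_inr i).1 h.symm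
    rw [point, point, Prod.mk_sub_mk, sub_zero, Prod.mk.injEq, add_left_inj] at hu
    refine B.height_sub_notMem hu.1.symm i.2 ?_
    rwa [← hu.2, sub_sub_cancel]
  rintro (_ | u) (_ | v) huv
  · rfl
  · exact (some_ne_none v huv.symm).elim
  · exact (some_ne_none u huv).elim
  · exact congrArg some (B.injective_point i (Sum.inr_injective huv))

theorem map_copy_adj {a b : ↥Pᶜ ⊕ A × R} : ((addPendant G y).map (B.copy i)).Adj a b ↔
    (∃ d : G.Dart, .inr (B.point i d.fst) = a ∧ .inr (B.point i d.snd) = b) ∨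
      (.inr (B.point i y) = a ∧ B.copy i none = b) ∨
      (.inr (B.point i y) = b ∧ B.copy i none = a) := by
  rw [show B.copy i = (⟨B.copy i, B.injective_copy i⟩ : Option U ↪ _) from rfl, map_adj]
  simp only [Option.exists, SimpleGraph.irrefl, false_and, false_or, addPendant_adj_none_some,
    addPendant_adj_some_some, (addPendant G y).adj_comm (some _) none, Function.Embedding.coeFn_mk]
  constructor
  · rintro (⟨_, rfl, ha, hb⟩ | ⟨u, ⟨rfl, ha, hb⟩ | ⟨v, huv, ha, hb⟩⟩)
    exacts [.inr (.inr ⟨hb, ha⟩), .inr (.inl ⟨ha, hb⟩), .inl ⟨⟨(u, v), huv⟩, ha, hb⟩]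
  · rintro (⟨d, ha, hb⟩ | ⟨ha, hb⟩ | ⟨hb, ha⟩)
    exacts [.inr ⟨_, .inr ⟨_, d.adj, ha, hb⟩⟩, .inr ⟨_, .inl ⟨rfl, ha, hb⟩⟩, .inl ⟨_, rfl, ha, hb⟩]

theorem label_fst_ne_label_snd (d : G.Dart) : B.label d.fst ≠ B.label d.snd := fun h ↦
  B.bijOn_dartDiff.mapsTo (Set.mem_univ d) (sub_eq_zero.2 h.symm)

theorem existsUnique_point_eq_drop_eq (a : A × R) (c : R) :
    ∃! i, B.point i y = a ∧ B.drop i.2 = c := by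
  obtain ⟨s, hs, huniq⟩ := B.bijective_drop.existsUnique (a.2, c)
  simp only [Prod.mk.injEq] at hs huniq
  refine ⟨(a.1 - B.label y, s), ⟨Prod.ext (add_sub_cancel _ _) hs.1, hs.2⟩, ?_⟩
  rintro ⟨a', s'⟩ ⟨rfl, hs'⟩
  exact Prod.ext (add_sub_cancel_left _ _).symm (huniq s' ⟨rfl, hs'⟩)

theorem existsUnique_dart_point_eq {a b : A × R} (hab : a.1 ≠ b.1) :
    ∃! i, ∃ d : G.Dart, B.point i d.fst = a ∧ B.point i d.snd = b := by
  obtain ⟨d, -, hd⟩ := B.bijOn_dartDiff.surjOn (sub_ne_zero.2 hab.symm)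
  obtain ⟨s, hs, huniq⟩ := (B.bijective_height d.adj).existsUnique (a.2, b.2)
  simp only [Prod.mk.injEq] at hs huniq
  refine ⟨(a.1 - B.label d.fst, s), ⟨d, Prod.ext (add_sub_cancel _ _) hs.1, Prod.ext ?_ hs.2⟩, ?_⟩
  · rw [dartDiff, sub_eq_sub_iff_add_eq_add] at hd
    rw [point, ← add_sub_assoc, sub_eq_iff_eq_add, hd]
  · rintro ⟨a', s'⟩ ⟨d', rfl, rfl⟩
    obtain rfl : d' = d := B.bijOn_dartDiff.injOn (Set.mem_univ _) (Set.mem_univ _) <|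
      hd.trans (add_sub_add_right_eq_sub _ _ _) |>.symm
    exact Prod.ext (add_sub_cancel_left _ _).symm (huniq s' ⟨rfl, rfl⟩)

theorem existsUnique_map_copy_adj_of_fst_ne {a b : A × R} (hab : a.1 ≠ b.1) :
    ∃! i, ((addPendant G y).map (B.copy i)).Adj (.inr a) (.inr b) := by
  refine (existsUnique_congr fun i ↦ ?_).2 (B.existsUnique_dart_point_eq hab)
  simp only [map_copy_adj, copy_none_eq_inr, Sum.inr.injEq]
  refine or_iff_left ?_
  rintro (⟨rfl, -, rfl⟩ | ⟨rfl, -, rfl⟩) <;> simp at hab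

theorem existsUnique_map_copy_adj_sub {a : A × R} {c : R} (hc : c ∈ P) (hc' : -c ∉ P) :
    ∃! i, ((addPendant G y).map (B.copy i)).Adj (.inr a) (.inr (a - (0, c))) := by
  refine (existsUnique_congr fun i ↦ ?_).2 (B.existsUnique_point_eq_drop_eq a c)
  simp only [map_copy_adj, copy_none_eq_inr, Sum.inr.injEq]
  constructor
  · rintro (⟨d, rfl, hd⟩ | ⟨rfl, -, hdrop⟩ | ⟨ha, hdrop, h⟩)
    · simp [point, Prod.ext_iff, (B.label_fst_ne_label_snd d).symm] at hd
    · simpa using hdrop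
    · rw [ha, sub_sub, sub_eq_self, Prod.mk_add_mk, Prod.mk_eq_zero] at h
      exact (hc' (eq_neg_of_add_eq_zero_right h.2 ▸ hdrop)).elim
  · rintro ⟨rfl, rfl⟩
    exact .inr (.inl ⟨rfl, hc, rfl⟩)

theorem existsUnique_map_copy_adj_inl (a : A × R) (c : ↥Pᶜ) :
    ∃! i, ((addPendant G y).map (B.copy i)).Adj (.inr a) (.inl c) := by
  refine (existsUnique_congr fun i ↦ ?_).2 (B.existsUnique_point_eq_drop_eq a c)
  simp [map_copy_adj, copy_none_eq_inl]

end CopyScheme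

theorem CopyScheme.decomposes {U A R S : Type} [AddCommGroup A] [AddCommGroup R]
    {G : SimpleGraph U} {y : U} {P : Set R} (B : CopyScheme G y A P S) (hP : IsHalfSystem P) :
    Decomposes (addPendant G y)
      (completeMinusClique (Set.range (Sum.inl : ↥Pᶜ → ↥Pᶜ ⊕ A × R))) := by
  refine decomposes_of_map B.copy B.injective_copy (fun i a b hab ↦ ?_) fun a b hab ↦ ?_
  · refine completeMinusClique_adj.2 ⟨hab.ne, ?_⟩
    rintro ⟨c, rfl⟩ ⟨c', rfl⟩
    simp [map_copy_adj] at hab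
  obtain ⟨hne, hW⟩ := completeMinusClique_adj.1 hab
  rcases a with c | a <;> rcases b with c' | b
  · simp at hW
  · simpa only [adj_comm] using B.existsUnique_map_copy_adj_inl b c
  · exact B.existsUnique_map_copy_adj_inl a c'
  · rw [Ne, Sum.inr.injEq] at hne
    by_cases hfst : a.1 = b.1; swap
    · exact B.existsUnique_map_copy_adj_of_fst_ne hfst
    have hsnd : a.2 - b.2 ≠ 0 := fun h ↦ hne (Prod.ext hfst (sub_eq_zero.1 h))
    by_cases hmem : a.2 - b.2 ∈ P
    · have hb : a - (0, a.2 - b.2) = b := Prod.ext (by simp [hfst]) (by simp)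
      exact hb ▸ B.existsUnique_map_copy_adj_sub hmem fun h ↦ (hP.neg_mem_iff hsnd).1 h hmem
    · have ha : b - (0, -(a.2 - b.2)) = a := Prod.ext (by simp [hfst]) (by simp)
      simpa only [ha, adj_comm] using
        B.existsUnique_map_copy_adj_sub (a := b) ((hP.neg_mem_iff hsnd).2 hmem) (by rwa [neg_neg])

end CopySchemes

section Construction

open SimpleGraph

theorem bijective_linearForm_add {R : Type*} [CommRing R] (h2 : IsUnit (2 : R)) {i j : Fin 4}
    (hij : i ≠ j) (a b : R) : Function.Bijective fun s : R × R ↦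
      (linearForm (formCoeff i) s + a, linearForm (formCoeff j) s + b) :=
  ((Equiv.addRight a).prodCongr (Equiv.addRight b)).bijective.comp
    (bijective_linearForm_prod (isUnit_det_formCoeff h2 hij))

theorem nonempty_copyScheme {U A R : Type*} [Finite U] [AddCommGroup A] [Finite A] [CommRing R]
    (h2 : IsUnit (2 : R)) {P : Set R} (hP : IsHalfSystem P) (h1 : 1 ∈ P) {G : SimpleGraph U}
    (hG : G.IsAcyclic) (y : U) {f : U → A} (hf : Set.BijOn (dartDiff f : G.Dart → A) Set.univ {0}ᶜ)
    {Λ : Set U} (hΛ : Set.InjOn f Λ) (hΛc : Set.InjOn f Λᶜ) :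
    Nonempty (CopyScheme G y A P (R × R)) := by
  classical
  obtain ⟨c⟩ := colorable_map_of_isAcyclic hG two_pos (ncard_preimage_singleton_le_two hΛ hΛc)
  obtain ⟨k, hk⟩ := exists_ne (c (f y))
  have h10 : (1 : R) ≠ 0 := ne_of_mem_of_not_mem h1 hP.zero_notMem
  have color_ne {u v : U} (huv : G.Adj u v) : c (f u) ≠ c (f v) :=
    c.valid <| map_adj_apply' huv fun h ↦
      hf.mapsTo (Set.mem_univ ⟨(u, v), huv⟩) (sub_eq_zero.2 h.symm)
  /- The vertex sharing the column of `y` is placed one step above it, so that it avoids the pendant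
  vertex, whose height is `height y` minus an element of `P`. -/
  set offset : U → R := fun u ↦ if u ∈ Λ ↔ y ∈ Λ then 0 else 1
  exact ⟨{
    label := f
    height u s := linearForm (formCoeff (c (f u))) s + offset u
    drop := linearForm (formCoeff k)
    bijOn_dartDiff := hf
    bijective_height huv := bijective_linearForm_add h2 (color_ne huv) _ _
    bijective_drop := by simpa using bijective_linearForm_add h2 hk.symm (offset y) 0
    height_ne {u v} huv h s hs := by
      rw [h, add_right_inj] at hs
      have hmem : u ∈ Λ ↔ v ∈ Λ := by
        have hoff : (u ∈ Λ ↔ y ∈ Λ) ↔ (v ∈ Λ ↔ y ∈ Λ) := by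
          by_contra hne
          simp only [offset] at hs
          split_ifs at hs <;> simp_all
        tauto
      by_cases hu : u ∈ Λ
      · exact huv (hΛ hu (hmem.1 hu) h)
      · exact huv (hΛc hu (fun hv ↦ hu (hmem.2 hv)) h)
    height_sub_notMem {u} h s := by
      rw [h, add_sub_add_left_eq_sub]
      by_cases hu : u ∈ Λ ↔ y ∈ Λ
      · simpa [offset, hu] using hP.zero_notMem
      · simpa [offset, hu, hP.neg_mem_iff h10] using h1 }⟩

theorem tree_decomposes_complete_minus_clique_general {m r : ℕ} (hm : (2 * m + 1).Prime)
    (hr : 1 < r) {V β : Type} [Finite V] [Finite β] {T : SimpleGraph V} (hT : T.IsTree)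
    (hedges : T.edgeSet.ncard = m + 1) {z : V} (hz : (T.neighborSet z).ncard = 1)
    (hleaves : m ≤ 3 * {v : {w : V // w ≠ z} |
      ((T.induce {w : V | w ≠ z}).neighborSet v).ncard = 1}.ncard + 2)
    {W : Set β} (hW : 2 * W.ncard = r + 1) (hβ : Nat.card β = r * (2 * m + 1) + W.ncard) :
    Decomposes T ((⊤ : SimpleGraph β).deleteEdges {e | ∀ v ∈ e, v ∈ W}) := by
  have : NeZero r := ⟨by omega⟩
  have hodd : Odd r := ⟨W.ncard - 1, by omega⟩
  obtain ⟨P, hP, hcard, h1⟩ := exists_isHalfSystem hr hodd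
  obtain ⟨y, ⟨e⟩⟩ := exists_addPendant_induce_iso hz
  obtain ⟨e'⟩ := nonempty_completeMinusClique_iso (B := ↥Pᶜ) (C := ZMod (2 * m + 1) × ZMod r)
    (W := W) (by rw [Nat.card_coe_set_eq]; omega) (by simp [hβ, mul_comm])
  have hG := isTree_induce_of_leaf hT hz
  have hU : Nat.card {w // w ≠ z} = m + 1 := by
    have hV := ncard_edgeSet_add_one hT
    have hcompl := Set.ncard_add_ncard_compl {z}
    rw [Set.ncard_singleton] at hcompl
    change ({z}ᶜ : Set V).ncard = m + 1
    omega
  have h2 : IsUnit (2 : ZMod r) := (ZMod.isUnit_iff_coprime 2 r).2 hodd.coprime_two_left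
  obtain ⟨f, Λ, hf, hΛ, hΛc⟩ := exists_bijOn_dartDiff_of_isTree hm hG hU hleaves
  obtain ⟨B⟩ := nonempty_copyScheme h2 hP h1 hG.isAcyclic y hf hΛ hΛc
  exact (B.decomposes hP).congr e e'

end Construction

/-- Let `r ≥ 3` be odd, `p = 2m+1 > 10` a prime, `t = (r+1)/2` and `n = r(2m+1) + t`.
Let `T` be a tree with `m+1` edges having a leaf `z` such that `T − z` has at least `2m/5`
leaves. Then `T` decomposes `K_n \ K_t`, the complete graph on `n` vertices minus the edges
inside a fixed `t`-element subset `W` of its vertices. -/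
theorem tree_decomposes_complete_minus_clique
    (r p m t n : ℕ) (hr : 3 ≤ r) (hodd : Odd r)
    (hp : p.Prime) (hpm : p = 2 * m + 1) (hp10 : 10 < p)
    (ht : t = (r + 1) / 2) (hn : n = r * (2 * m + 1) + t)
    {V : Type} [Fintype V] (T : SimpleGraph V) (hT : T.IsTree)
    (hedges : T.edgeSet.ncard = m + 1)
    (z : V) (hz : (T.neighborSet z).ncard = 1)
    (hleaves : 2 * m ≤ 5 *
      {v : {w : V // w ≠ z} |
        ((T.induce {w : V | w ≠ z}).neighborSet v).ncard = 1}.ncard)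
    (W : Finset (Fin n)) (hW : W.card = t) :
    Decomposes T ((⊤ : SimpleGraph (Fin n)).deleteEdges
      {e : Sym2 (Fin n) | ∀ v ∈ e, v ∈ W}) := by
  obtain ⟨k, rfl⟩ := hodd
  refine tree_decomposes_complete_minus_clique_general (W := (W : Set (Fin n))) (hpm ▸ hp)
    (by omega : 1 < 2 * k + 1) hT hedges hz (by omega) ?_ ?_ <;> rw [Set.ncard_coe_finset]
  · omega
  · rw [Nat.card_fin, hW, hn]
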